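/- The R-bracket (f,g)_R = (f ∂⃖_A) R^{AB} (∂⃗_B g) measures the failure of the Leibniz rule for Δ_F with respect to the antibracket: for all functions f,g, (1/2)(f,g)_R = (-1)^{ε_f} Δ_F(f,g) - (-1)^{ε_f}(Δ_F f, g) + (f, Δ_F g). -/

import Mathlib

/-!
Write `X_f = (f, ·)` for the Hamiltonian vector field of `f`, with components
`X_f^B = (f ∂⃖_A) E^{AB} = (f, Γ^B)`, and let
`div_F X = (-1)^{ε_A (ε_X + 1)} (∂_A + F_A) X^A` be the divergence of a vector field with respect
to the connection `F`. The identity rests on three facts.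

* By skewsymmetry of `E`, `Δ_F f = (-1)^{ε_f} (1/2) div_F X_f` (`lap_eq_divF`).
* The Jacobi identity for `f`, `g` and a coordinate `Γ^C` says `X_{(f,g)} = [X_f, X_g]`
  componentwise (`ham_brkt`).
* For arbitrary vector fields,
  `div_F [X,Y] = X (div_F Y) - (-1)^{ε_X ε_Y} Y (div_F X) - (-1)^{ε_A (ε_Y + 1)} X^B R_{BA} Y^A`
  (`divF_lie`): the terms `(∂_A X^B)(∂_B Y^A)` are graded symmetric and cancel, and the
  derivatives of `F` combine into the curvature.

Inserting `X = X_f`, `Y = X_g`, the curvature term is `(f,g)_R` up to the sign `(-1)^{ε_g}`, and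
skewsymmetry of the antibracket turns `X_g (Δ_F f)` into `(Δ_F f, g)`.
-/

open scoped BigOperators

noncomputable section

/-- The sign `(-1)^p` for a parity `p : ZMod 2`, valued in `ℚ`. -/
def sgn (p : ZMod 2) : ℚ := if p = 0 then 1 else -1

/-- A supercommutative algebra of "functions on a superdomain" with local coordinates
`coord i`, Grassmann parities `ε i`, and left partial derivatives `D i`. -/
structure SuperAlg (ι : Type) [Fintype ι] [DecidableEq ι]
    (A : Type) [Ring A] [Algebra ℚ A] where
  ε : ι → ZMod 2
  hom : ZMod 2 → Submodule ℚ A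
  one_mem : (1 : A) ∈ hom 0
  mul_mem : ∀ {p q : ZMod 2} {a b : A}, a ∈ hom p → b ∈ hom q → a * b ∈ hom (p + q)
  supercomm : ∀ {p q : ZMod 2} {a b : A}, a ∈ hom p → b ∈ hom q →
    a * b = sgn (p * q) • (b * a)
  D : ι → A →ₗ[ℚ] A
  D_mem : ∀ (i : ι) {p : ZMod 2} {a : A}, a ∈ hom p → D i a ∈ hom (p + ε i)
  D_leibniz : ∀ (i : ι) {p : ZMod 2} {a : A} (b : A), a ∈ hom p →
    D i (a * b) = D i a * b + sgn (ε i * p) • (a * D i b)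
  D_comm : ∀ (i j : ι) (a : A), D i (D j a) = sgn (ε i * ε j) • D j (D i a)
  coord : ι → A
  coord_mem : ∀ i, coord i ∈ hom (ε i)
  D_coord : ∀ i j, D i (coord j) = if i = j then (1 : A) else 0

namespace SuperAlg

variable {ι : Type} [Fintype ι] [DecidableEq ι]
variable {A : Type} [Ring A] [Algebra ℚ A]

/-- The operator of left multiplication by `f`. -/
def L (f : A) : A →ₗ[ℚ] A := LinearMap.mulLeft ℚ f

/-- The graded commutator `[T,U] = T∘U - (-1)^{pq} U∘T` of operators of parities `p`, `q`. -/
def gcomm (p q : ZMod 2) (T U : A →ₗ[ℚ] A) : A →ₗ[ℚ] A :=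
  T ∘ₗ U - sgn (p * q) • (U ∘ₗ T)

variable (S : SuperAlg ι A)

/-- The bracket `(f,g) = (f ∂⃖_A) M^{AB} (∂_B g)` built from the matrix `M`,
for `f` homogeneous of parity `pf`; the right derivative is expressed through
the left one via `f ∂⃖_A = (-1)^{ε_A (ε_f + 1)} ∂_A f`. -/
def brkt (M : ι → ι → A) (pf : ZMod 2) (f g : A) : A :=
  ∑ a, ∑ b, sgn (S.ε a * (pf + 1)) • (S.D a f * (M a b * S.D b g))

/-- The first-order operator `(x, ·)` (for Grassmann-odd `x`), built from the matrix `M`. -/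
def Hop (M : ι → ι → A) (x : A) : A →ₗ[ℚ] A :=
  ∑ a, ∑ b, L (S.D a x) ∘ₗ L (M a b) ∘ₗ S.D b

/-- The Laplacian `((-1)^{ε_A}/2)(∂_A + F_A) M^{AB} ∂_B`. -/
def lap (F : ι → A) (M : ι → ι → A) : A →ₗ[ℚ] A :=
  (1/2 : ℚ) • ∑ a, ∑ b, sgn (S.ε a) •
    ((S.D a ∘ₗ L (M a b) ∘ₗ S.D b) + (L (F a) ∘ₗ L (M a b) ∘ₗ S.D b))

/-- The curvature `R_{AB} = (∂_A F_B) - (-1)^{ε_A ε_B}(∂_B F_A)` of a line bundle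
connection `F`. -/
def curv (F : ι → A) (a b : ι) : A :=
  S.D a (F b) - sgn (S.ε a * S.ε b) • S.D b (F a)

/-- The raised-index curvature `R^{AD} = E^{AB} R_{BC} E^{CD} (-1)^{ε_C}`. -/
def curvUp (E : ι → ι → A) (F : ι → A) (a d : ι) : A :=
  ∑ b, ∑ c, sgn (S.ε c) • (E a b * (S.curv F b c * E c d))

/-- The graded Jacobi identity for the antibracket, on homogeneous functions. -/
def JacobiId (E : ι → ι → A) : Prop :=
  ∀ (pf pg ph : ZMod 2) (f g h : A),
    f ∈ S.hom pf → g ∈ S.hom pg → h ∈ S.hom ph →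
      sgn ((pf + 1) * (ph + 1)) • S.brkt E pf f (S.brkt E pg g h)
      + sgn ((pg + 1) * (pf + 1)) • S.brkt E pg g (S.brkt E ph h f)
      + sgn ((ph + 1) * (pg + 1)) • S.brkt E ph h (S.brkt E pf f g) = 0

/-- The closedness relation `Σ_{cycl. A,B,C} (-1)^{ε_A ε_C} (∂_A E_{BC}) = 0`
for the two-form with components `Einv`. -/
def ClosedId (Einv : ι → ι → A) : Prop :=
  ∀ a b c : ι,
    sgn (S.ε a * S.ε c) • S.D a (Einv b c)
    + sgn (S.ε b * S.ε a) • S.D b (Einv c a)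
    + sgn (S.ε c * S.ε b) • S.D c (Einv a b) = 0

/-- The Jacobi identity `Σ_{cycl. A,B,C} (-1)^{(ε_A+1)(ε_C+1)} E^{AD} (∂_D E^{BC}) = 0`
in terms of the matrix `E^{AB}`. -/
def EJacobiId (E : ι → ι → A) : Prop :=
  ∀ a b c : ι,
    ∑ d, (sgn ((S.ε a + 1) * (S.ε c + 1)) • (E a d * S.D d (E b c))
      + sgn ((S.ε b + 1) * (S.ε a + 1)) • (E b d * S.D d (E c a))
      + sgn ((S.ε c + 1) * (S.ε b + 1)) • (E c d * S.D d (E a b))) = 0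

/-- `E` is a non-degenerate graded-skewsymmetric (2,0)-tensor with inverse `Einv`. -/
structure AntiSymp (E Einv : ι → ι → A) : Prop where
  E_mem : ∀ a b, E a b ∈ S.hom (S.ε a + S.ε b + 1)
  E_skew : ∀ a b, E a b = - sgn ((S.ε a + 1) * (S.ε b + 1)) • E b a
  Einv_mem : ∀ a b, Einv a b ∈ S.hom (S.ε a + S.ε b + 1)
  Einv_skew : ∀ a b, Einv a b = - sgn (S.ε a * S.ε b) • Einv b a
  mul_inv : ∀ a c, ∑ b, E a b * Einv b c = if a = c then (1 : A) else 0
  inv_mul : ∀ a c, ∑ b, Einv a b * E b c = if a = c then (1 : A) else 0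

/-- An operator `T` of parity `pT` is of at most first order iff all its double graded
commutators with left multiplication operators vanish. -/
def IsFirstOrder (pT : ZMod 2) (T : A →ₗ[ℚ] A) : Prop :=
  ∀ (pf pg : ZMod 2) (f g : A), f ∈ S.hom pf → g ∈ S.hom pg →
    gcomm (pT + pf) pg (gcomm pT pf T (L f)) (L g) = 0

/-- The third-order terms of an operator `T` of parity `pT` vanish iff all its triple
graded commutators with left multiplication operators vanish. -/
def ThirdOrderVanish (pT : ZMod 2) (T : A →ₗ[ℚ] A) : Prop :=
  ∀ (pf pg ph : ZMod 2) (f g h : A),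
    f ∈ S.hom pf → g ∈ S.hom pg → h ∈ S.hom ph →
      gcomm (pT + pf + pg) ph
        (gcomm (pT + pf) pg (gcomm pT pf T (L f)) (L g)) (L h) = 0

/-- `ν_F^{(0)} = ((-1)^{ε_A}/4)(∂_A + F_A/2)(E^{AB} F_B)`. -/
def nuF0 (E : ι → ι → A) (F : ι → A) : A :=
  (1/4 : ℚ) • ∑ a, ∑ b, sgn (S.ε a) •
    (S.D a (E a b * F b) + (1/2 : ℚ) • (F a * (E a b * F b)))

/-- `ν^{(1)} = (-1)^{ε_A} (∂_B ∂_A E^{AB})`. -/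
def nu1 (E : ι → ι → A) : A :=
  ∑ a, ∑ b, sgn (S.ε a) • S.D b (S.D a (E a b))

/-- `ν^{(2)} = (-1)^{ε_A ε_C} (∂_D E^{AB}) E_{BC} (∂_A E^{CD})`. -/
def nu2 (E Einv : ι → ι → A) : A :=
  ∑ a, ∑ b, ∑ c, ∑ d, sgn (S.ε a * S.ε c) •
    (S.D d (E a b) * (Einv b c * S.D a (E c d)))

/-- `ν_F = ν_F^{(0)} + ν^{(1)}/8 - ν^{(2)}/24`. -/
def nuF (E Einv : ι → ι → A) (F : ι → A) : A :=
  S.nuF0 E F + (1/8 : ℚ) • S.nu1 E - (1/24 : ℚ) • S.nu2 E Einv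

/-- The divergence `div_1 X = (-1)^{ε_A} (∂_A X^A)`. -/
def div1 (X : ι → A) : A := ∑ a, sgn (S.ε a) • S.D a (X a)

/-- A form variation (infinitesimal coordinate transformation `δΓ^A = X^A`, compared
at the same argument): an even derivation commuting with the partial derivatives. -/
structure FormVar (X : ι → A) (δv : A →ₗ[ℚ] A) : Prop where
  deriv : ∀ a b : A, δv (a * b) = δv a * b + a * δv b
  commD : ∀ (i : ι) (a : A), δv (S.D i a) = S.D i (δv a)
  X_mem : ∀ i, X i ∈ S.hom (S.ε i)

/-- The form variation of a (2,0)-tensor `E^{AB}` under `δΓ^A = X^A`: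
`δE^{AB} = (X^A ∂⃖_C) E^{CB} + E^{AC}(∂_C X^B) - X^C (∂_C E^{AB})`. -/
def VarE (X : ι → A) (δv : A →ₗ[ℚ] A) (E : ι → ι → A) : Prop :=
  ∀ a b, δv (E a b) =
    (∑ c, sgn (S.ε c * (S.ε a + 1)) • (S.D c (X a) * E c b))
    + (∑ c, E a c * S.D c (X b))
    - ∑ c, X c * S.D c (E a b)

/-- The form variation of a line bundle connection `F_A` under `δΓ^A = X^A`:
`δF_A = -(∂_A X^B) F_B - ∂_A(div_1 X) - X^C (∂_C F_A)`. -/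
def VarF (X : ι → A) (δv : A →ₗ[ℚ] A) (F : ι → A) : Prop :=
  ∀ a, δv (F a) =
    - (∑ b, S.D a (X b) * F b) - S.D a (S.div1 X) - ∑ c, X c * S.D c (F a)

/-- Khudaverdian–Voronov's odd quantity
`ν(F¹;F²,E) = ((-1)^{ε_A}/4)(∂_A + (F¹_A+F²_A)/2)(E^{AB}(F¹_B - F²_B))`. -/
def nu12 (E : ι → ι → A) (F1 F2 : ι → A) : A :=
  (1/4 : ℚ) • ∑ a, ∑ b, sgn (S.ε a) •
    (S.D a (E a b * (F1 b - F2 b))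
      + (1/2 : ℚ) • ((F1 a + F2 a) * (E a b * (F1 b - F2 b))))

/-- The odd Laplacian `Δ_ρ = ((-1)^{ε_A}/(2ρ)) ∂_A ρ E^{AB} ∂_B` for a density `ρ`
with inverse `ρinv`. -/
def lapRho (E : ι → ι → A) (ρ ρinv : A) : A →ₗ[ℚ] A :=
  (1/2 : ℚ) • ∑ a, ∑ b, sgn (S.ε a) •
    (L ρinv ∘ₗ S.D a ∘ₗ L ρ ∘ₗ L (E a b) ∘ₗ S.D b)

/-- `ν_ρ^{(0)} = (Δ_1 √ρ)/√ρ`, where `sq = √ρ` and `sqinv = 1/√ρ`. -/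
def nuRho0 (E : ι → ι → A) (sq sqinv : A) : A :=
  sqinv * (S.lap (fun _ => (0 : A)) E sq)

/-- `ν_ρ = ν_ρ^{(0)} + ν^{(1)}/8 - ν^{(2)}/24`. -/
def nuRho (E Einv : ι → ι → A) (sq sqinv : A) : A :=
  S.nuRho0 E sq sqinv + (1/8 : ℚ) • S.nu1 E - (1/24 : ℚ) • S.nu2 E Einv

/-- Khudaverdian's operator `Δ_E = Δ_1 + ν^{(1)}/8 - ν^{(2)}/24`. -/
def lapE (E Einv : ι → ι → A) : A →ₗ[ℚ] A :=
  S.lap (fun _ => (0 : A)) E + L ((1/8 : ℚ) • S.nu1 E - (1/24 : ℚ) • S.nu2 E Einv)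

/-- The reordered Christoffel symbols `Γ^A{}_{BC} = (-1)^{ε_A ε_B} Γ_B{}^A{}_C`. -/
def Gup (Gm : ι → ι → ι → A) (a b c : ι) : A := sgn (S.ε a * S.ε b) • Gm b a c

/-- The reordered Riemann curvature tensor
`R^A{}_{BCD} = (-1)^{ε_A ε_B}(∂_B Γ^A{}_{CD}) + Γ^A{}_{BE} Γ^E{}_{CD} - (-1)^{ε_B ε_C}(B ↔ C)`,
expressed through the reordered Christoffel symbols `Gu = Γ^·{}_{··}`. -/
def riemRe (Gu : ι → ι → ι → A) (a b c d : ι) : A :=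
  sgn (S.ε a * S.ε b) • S.D b (Gu a c d) + (∑ e, Gu a b e * Gu e c d)
  - sgn (S.ε b * S.ε c) •
      (sgn (S.ε a * S.ε c) • S.D c (Gu a b d) + ∑ e, Gu a c e * Gu e b d)

/-- The Ricci tensor `R_{AB} = R^C{}_{CAB}`. -/
def ricci (Gu : ι → ι → ι → A) (a b : ι) : A := ∑ c, S.riemRe Gu c c a b

/-- The odd scalar curvature `R = R_{AB} E^{BA}`. -/
def scalarR (Gu : ι → ι → ι → A) (E : ι → ι → A) : A :=
  ∑ a, ∑ b, S.ricci Gu a b * E b a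

/-- The Riemann curvature tensor
`R_{AB}{}^C{}_D = (∂_A Γ_B{}^C{}_D) + (-1)^{ε_B ε_C} Γ_A{}^C{}_E Γ^E{}_{BD} - (-1)^{ε_A ε_B}(A ↔ B)`,
built from the Christoffel symbols `Gm = Γ_·{}^·{}_·`. -/
def riem (Gm : ι → ι → ι → A) (a b c d : ι) : A :=
  S.D a (Gm b c d) + sgn (S.ε b * S.ε c) • (∑ e, Gm a c e * S.Gup Gm e b d)
  - sgn (S.ε a * S.ε b) •
      (S.D b (Gm a c d) + sgn (S.ε a * S.ε c) • ∑ e, Gm b c e * S.Gup Gm e a d)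

/-- The Christoffel symbols with three lower indices,
`Γ_{ABC} = E_{AD} Γ^D{}_{BC} (-1)^{ε_B}`, built from `Gu = Γ^·{}_{··}`. -/
def Glow (Einv : ι → ι → A) (Gu : ι → ι → ι → A) (a b c : ι) : A :=
  sgn (S.ε b) • ∑ d, Einv a d * Gu d b c

/-- `γ_{ABC} = Γ_{ABC} - (1/3)(E_{AB} ∂⃖_C + E_{AC} ∂⃖_B (-1)^{ε_B ε_C})`. -/
def gam (Einv : ι → ι → A) (Gu : ι → ι → ι → A) (a b c : ι) : A :=
  S.Glow Einv Gu a b c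
  - (1/3 : ℚ) • (sgn (S.ε c * (S.ε a + S.ε b)) • S.D c (Einv a b)
      + sgn (S.ε b * S.ε c) • (sgn (S.ε b * (S.ε a + S.ε c)) • S.D b (Einv a c)))

end SuperAlg

namespace SuperAlg

theorem sgn_add (p q : ZMod 2) : sgn (p + q) = sgn p * sgn q := by
  have h : ∀ p : ZMod 2, p = 0 ∨ p = 1 := by decide
  have h11 : (1 + 1 : ZMod 2) = 0 := by decide
  rcases h p with rfl | rfl <;> rcases h q with rfl | rfl <;> simp [sgn, h11]

theorem neg_eq_sgn_smul {A : Type} [Ring A] [Algebra ℚ A] (x : A) :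
    -x = sgn 1 • x := by simp [sgn]

theorem sgn_zero : sgn 0 = 1 := by simp [sgn]

section

variable {ι : Type} [Fintype ι] [DecidableEq ι] {A : Type} [Ring A] [Algebra ℚ A]
  (S : SuperAlg ι A)

theorem mem_of_eq {p q : ZMod 2} {x : A} (h : x ∈ S.hom p) (e : p = q) : x ∈ S.hom q := e ▸ h

/-- The component `X_f^B = (f ∂⃖_A) E^{AB}` of the Hamiltonian vector field `(f, ·)` of a
function `f` of parity `pf`. -/
def ham (E : ι → ι → A) (pf : ZMod 2) (f : A) (b : ι) : A :=
  ∑ a, sgn (S.ε a * (pf + 1)) • (S.D a f * E a b)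

/-- The divergence `(-1)^{ε_A (p + 1)} (∂_A + F_A) X^A` of a vector field of parity `p`, that is
with components `X^A` of parity `p + ε_A`. -/
def divF (F : ι → A) (p : ZMod 2) (X : ι → A) : A :=
  ∑ a, sgn (S.ε a * (p + 1)) • (S.D a (X a) + F a * X a)

theorem brkt_eq (E : ι → ι → A) (pf : ZMod 2) (f g : A) :
    S.brkt E pf f g = ∑ b, S.ham E pf f b * S.D b g := by
  simp only [brkt, ham, Finset.sum_mul, smul_mul_assoc, mul_assoc]
  exact Finset.sum_comm

theorem brkt_coord (E : ι → ι → A) (pf : ZMod 2) (f : A) (k : ι) :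
    S.brkt E pf f (S.coord k) = S.ham E pf f k := by
  simp [brkt_eq, S.D_coord]

variable {E : ι → ι → A} {F : ι → A}

theorem ham_mem (hE : ∀ a b, E a b ∈ S.hom (S.ε a + S.ε b + 1)) {pf : ZMod 2} {f : A}
    (hf : f ∈ S.hom pf) (b : ι) : S.ham E pf f b ∈ S.hom (pf + 1 + S.ε b) := by
  refine Submodule.sum_mem _ fun a _ => Submodule.smul_mem _ _ ?_
  refine S.mem_of_eq (S.mul_mem (S.D_mem a hf) (hE a b)) ?_
  generalize S.ε a = x; generalize S.ε b = y
  clear * -; revert x y pf; decide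

theorem brkt_mem (hE : ∀ a b, E a b ∈ S.hom (S.ε a + S.ε b + 1)) {pf pg : ZMod 2} {f g : A}
    (hf : f ∈ S.hom pf) (hg : g ∈ S.hom pg) : S.brkt E pf f g ∈ S.hom (pf + pg + 1) := by
  rw [brkt_eq]
  refine Submodule.sum_mem _ fun b _ => ?_
  refine S.mem_of_eq (S.mul_mem (S.ham_mem hE hf b) (S.D_mem b hg)) ?_
  generalize S.ε b = y
  clear * -; revert y pf pg; decide

theorem divF_mem (hF : ∀ a, F a ∈ S.hom (S.ε a)) {p : ZMod 2} {X : ι → A}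
    (hX : ∀ a, X a ∈ S.hom (p + S.ε a)) : S.divF F p X ∈ S.hom p := by
  refine Submodule.sum_mem _ fun a _ => Submodule.smul_mem _ _ (Submodule.add_mem _ ?_ ?_)
  · refine S.mem_of_eq (S.D_mem a (hX a)) ?_
    generalize S.ε a = y
    clear * -; revert y p; decide
  · refine S.mem_of_eq (S.mul_mem (hF a) (hX a)) ?_
    generalize S.ε a = y
    clear * -; revert y p; decide

/-- Acting from the right instead of from the left with `E` on the gradient of `g` changes the
result by a sign, by skewsymmetry of `E`. -/
theorem sum_E_mul_D (hE : ∀ a b, E a b ∈ S.hom (S.ε a + S.ε b + 1))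
    (hs : ∀ a b, E a b = - sgn ((S.ε a + 1) * (S.ε b + 1)) • E b a) {pg : ZMod 2} {g : A}
    (hg : g ∈ S.hom pg) (c : ι) :
    ∑ d, E c d * S.D d g = sgn (S.ε c * (pg + 1) + pg) • S.ham E pg g c := by
  rw [ham, Finset.smul_sum]
  refine Finset.sum_congr rfl fun d _ => ?_
  rw [hs c d, neg_smul, neg_mul, smul_mul_assoc, S.supercomm (hE d c) (S.D_mem d hg),
    neg_eq_sgn_smul]
  simp only [smul_smul, ← sgn_add]
  congr 2
  generalize S.ε c = x; generalize S.ε d = y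
  clear * -; revert x y pg; decide

theorem brkt_skew (hE : ∀ a b, E a b ∈ S.hom (S.ε a + S.ε b + 1))
    (hs : ∀ a b, E a b = - sgn ((S.ε a + 1) * (S.ε b + 1)) • E b a) {pf pg : ZMod 2} {f g : A}
    (hf : f ∈ S.hom pf) (hg : g ∈ S.hom pg) :
    S.brkt E pf f g = sgn ((pf + 1) * (pg + 1) + 1) • S.brkt E pg g f := by
  rw [S.brkt_eq E pg, brkt, Finset.smul_sum]
  refine Finset.sum_congr rfl fun a _ => ?_
  rw [← Finset.smul_sum, ← Finset.mul_sum, S.sum_E_mul_D hE hs hg, mul_smul_comm,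
    S.supercomm (S.D_mem a hf) (S.ham_mem hE hg a)]
  simp only [smul_smul, ← sgn_add]
  congr 2
  generalize S.ε a = x
  clear * -; revert x pf pg; decide

theorem lap_eq_divF (hE : ∀ a b, E a b ∈ S.hom (S.ε a + S.ε b + 1))
    (hs : ∀ a b, E a b = - sgn ((S.ε a + 1) * (S.ε b + 1)) • E b a) {pf : ZMod 2} {f : A}
    (hf : f ∈ S.hom pf) :
    S.lap F E f = (1/2 : ℚ) • sgn pf • S.divF F (pf + 1) (S.ham E pf f) := by
  simp only [lap, L, LinearMap.smul_apply, LinearMap.sum_apply, LinearMap.add_apply,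
    LinearMap.comp_apply, LinearMap.mulLeft_apply, divF]
  congr 1
  rw [Finset.smul_sum]
  refine Finset.sum_congr rfl fun a _ => ?_
  rw [← Finset.smul_sum, Finset.sum_add_distrib, ← map_sum, ← Finset.mul_sum,
    S.sum_E_mul_D hE hs hf, map_smul, mul_smul_comm, ← smul_add]
  simp only [smul_smul, ← sgn_add]
  congr 2
  generalize S.ε a = x
  clear * -; revert x pf; decide

/-- The map `f ↦ X_f` sends the antibracket to the graded commutator of vector fields: this is the
Jacobi identity with a coordinate as the third function. -/
theorem ham_brkt (hE : ∀ a b, E a b ∈ S.hom (S.ε a + S.ε b + 1))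
    (hs : ∀ a b, E a b = - sgn ((S.ε a + 1) * (S.ε b + 1)) • E b a) (hJ : S.JacobiId E)
    {pf pg : ZMod 2} {f g : A} (hf : f ∈ S.hom pf) (hg : g ∈ S.hom pg) (k : ι) :
    S.ham E (pf + pg + 1) (S.brkt E pf f g) k =
      (∑ b, S.ham E pf f b * S.D b (S.ham E pg g k))
        - sgn ((pf + 1) * (pg + 1)) • ∑ b, S.ham E pg g b * S.D b (S.ham E pf f k) := by
  have hk := S.coord_mem k
  have J := hJ pf pg (S.ε k) f g (S.coord k) hf hg hk
  rw [S.brkt_skew hE hs hk hf, S.brkt_skew hE hs hk (S.brkt_mem hE hf hg)] at J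
  simp only [brkt_coord] at J
  simp only [S.brkt_eq E pf f (S.ham E pg g k), S.brkt_eq E pg g (_ • _), map_smul, mul_smul_comm,
    ← Finset.smul_sum] at J
  generalize (∑ b, S.ham E pf f b * S.D b (S.ham E pg g k)) = u at *
  generalize (∑ b, S.ham E pg g b * S.D b (S.ham E pf f k)) = v at *
  generalize S.ham E (pf + pg + 1) (S.brkt E pf f g) k = w at *
  generalize S.ε k = x at *
  have J' := congrArg (fun z => sgn ((pf + 1) * (x + 1)) • z) J
  simp only [smul_add, smul_smul, ← sgn_add, smul_zero] at J'
  have e1 : (pf + 1) * (x + 1) + (pf + 1) * (x + 1) = 0 := by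
    clear * -; revert pf x; decide
  have e2 : (pf + 1) * (x + 1) + ((pg + 1) * (pf + 1) + ((x + 1) * (pf + 1) + 1))
      = 1 + (pf + 1) * (pg + 1) := by
    clear * -; revert pf pg x; decide
  have e3 : (pf + 1) * (x + 1) + ((x + 1) * (pg + 1) + ((x + 1) * (pf + pg + 1 + 1) + 1))
      = 1 := by
    clear * -; revert pf pg x; decide
  rw [e1, e2, e3, sgn_add 1, mul_smul, ← neg_eq_sgn_smul, ← neg_eq_sgn_smul, sgn_zero,
    one_smul] at J'
  rw [← sub_eq_zero, ← neg_eq_zero, ← J']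
  abel

/-- The part of `div_F [X,Y]` coming from the term `X^B ∂_B Y^A` of the commutator. -/
theorem divF_half (hF : ∀ a, F a ∈ S.hom (S.ε a)) {p q : ZMod 2} {X Y : ι → A}
    (hX : ∀ a, X a ∈ S.hom (p + S.ε a)) :
    S.divF F (p + q) (fun k => ∑ b, X b * S.D b (Y k)) =
      (∑ b, X b * S.D b (S.divF F q Y))
        + (∑ a, ∑ b, sgn (S.ε a * (p + q + 1)) • (S.D a (X b) * S.D b (Y a)))
        - ∑ a, ∑ b, sgn (S.ε a * (q + 1)) • (X b * (S.D b (F a) * Y a)) := by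
  have h1 : (∑ b, X b * S.D b (S.divF F q Y)) = ∑ a, ∑ b, sgn (S.ε a * (q + 1)) •
      (X b * S.D b (S.D a (Y a)) + X b * (S.D b (F a) * Y a)
        + sgn (S.ε b * S.ε a) • (X b * (F a * S.D b (Y a)))) := by
    rw [Finset.sum_comm]
    refine Finset.sum_congr rfl fun b _ => ?_
    rw [divF, map_sum, Finset.mul_sum]
    refine Finset.sum_congr rfl fun a _ => ?_
    rw [map_smul, map_add, S.D_leibniz b _ (hF a), mul_smul_comm, mul_add (X b), mul_add (X b),
      mul_smul_comm, add_assoc]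
  rw [h1, divF, ← Finset.sum_add_distrib, ← Finset.sum_sub_distrib]
  refine Finset.sum_congr rfl fun a _ => ?_
  rw [map_sum, Finset.mul_sum, ← Finset.sum_add_distrib, Finset.smul_sum,
    ← Finset.sum_add_distrib, ← Finset.sum_sub_distrib]
  refine Finset.sum_congr rfl fun b _ => ?_
  rw [S.D_leibniz a _ (hX b), S.D_comm a b, ← mul_assoc (F a), S.supercomm (hF a) (hX b),
    smul_mul_assoc, mul_assoc (X b) (F a)]
  simp only [smul_add, mul_smul_comm, smul_smul, ← sgn_add]
  have e1 : S.ε a * (p + q + 1) + (S.ε a * (p + S.ε b) + S.ε a * S.ε b) = S.ε a * (q + 1) := by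
    generalize S.ε a = x; generalize S.ε b = y
    clear * -; revert x y p q; decide
  have e2 : S.ε a * (p + q + 1) + S.ε a * (p + S.ε b) = S.ε a * (q + 1) + S.ε b * S.ε a := by
    generalize S.ε a = x; generalize S.ε b = y
    clear * -; revert x y p q; decide
  rw [e1, e2]
  abel

theorem divF_lie (hF : ∀ a, F a ∈ S.hom (S.ε a)) {p q : ZMod 2} {X Y : ι → A}
    (hX : ∀ a, X a ∈ S.hom (p + S.ε a)) (hY : ∀ a, Y a ∈ S.hom (q + S.ε a)) :
    S.divF F (p + q) (fun k => (∑ b, X b * S.D b (Y k))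
        - sgn (p * q) • ∑ b, Y b * S.D b (X k)) =
      (∑ b, X b * S.D b (S.divF F q Y)) - sgn (p * q) • (∑ b, Y b * S.D b (S.divF F p X))
        - ∑ a, ∑ b, sgn (S.ε a * (q + 1)) • (X b * (S.curv F b a * Y a)) := by
  have hlin : S.divF F (p + q) (fun k => (∑ b, X b * S.D b (Y k))
        - sgn (p * q) • ∑ b, Y b * S.D b (X k)) =
      S.divF F (p + q) (fun k => ∑ b, X b * S.D b (Y k))
        - sgn (p * q) • S.divF F (q + p) (fun k => ∑ b, Y b * S.D b (X k)) := by
    simp only [divF, Finset.smul_sum (r := sgn (p * q)) (f := fun a => _ • (_ + _)),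
      ← Finset.sum_sub_distrib]
    refine Finset.sum_congr rfl fun a _ => ?_
    rw [map_sub, map_smul, mul_sub, mul_smul_comm, add_comm q p, smul_comm (sgn (p * q)),
      ← smul_sub]
    congr 1
    rw [smul_add]
    abel
  have hT : (∑ a, ∑ b, sgn (S.ε a * (p + q + 1)) • (S.D a (X b) * S.D b (Y a))) =
      sgn (p * q) • ∑ a, ∑ b, sgn (S.ε a * (q + p + 1)) • (S.D a (Y b) * S.D b (X a)) := by
    rw [Finset.sum_comm, Finset.smul_sum]
    refine Finset.sum_congr rfl fun b _ => ?_
    rw [Finset.smul_sum]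
    refine Finset.sum_congr rfl fun a _ => ?_
    rw [S.supercomm (S.D_mem a (hX b)) (S.D_mem b (hY a))]
    simp only [smul_smul, ← sgn_add]
    congr 2
    generalize S.ε a = x; generalize S.ε b = y
    clear * -; revert x y p q; decide
  have hR : (∑ a, ∑ b, sgn (S.ε a * (q + 1)) • (X b * (S.curv F b a * Y a))) =
      (∑ a, ∑ b, sgn (S.ε a * (q + 1)) • (X b * (S.D b (F a) * Y a)))
      - sgn (p * q) • ∑ a, ∑ b, sgn (S.ε a * (p + 1)) • (Y b * (S.D b (F a) * X a)) := by
    rw [Finset.sum_comm (f := fun a b => sgn (S.ε a * (p + 1)) • (Y b * (S.D b (F a) * X a))),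
      Finset.smul_sum, ← Finset.sum_sub_distrib]
    refine Finset.sum_congr rfl fun a _ => ?_
    rw [Finset.smul_sum, ← Finset.sum_sub_distrib]
    refine Finset.sum_congr rfl fun b _ => ?_
    rw [curv, sub_mul, mul_sub, smul_sub, smul_mul_assoc, mul_smul_comm,
      S.supercomm (hY a) (S.mul_mem (S.D_mem a (hF b)) (hX b)),
      S.supercomm (S.D_mem a (hF b)) (hX b), smul_mul_assoc, mul_assoc (X b)]
    congr 1
    simp only [smul_smul, ← sgn_add]
    congr 2
    generalize S.ε a = x; generalize S.ε b = y
    clear * -; revert x y p q; decide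
  rw [hlin, S.divF_half hF hX, S.divF_half hF hY, hT, hR]
  simp only [smul_add, smul_sub]
  abel

/-- The R-bracket is the curvature evaluated on the Hamiltonian vector fields of `f` and `g`. -/
theorem brkt_curvUp (hE : ∀ a b, E a b ∈ S.hom (S.ε a + S.ε b + 1))
    (hs : ∀ a b, E a b = - sgn ((S.ε a + 1) * (S.ε b + 1)) • E b a) (pf : ZMod 2) (f : A)
    {pg : ZMod 2} {g : A} (hg : g ∈ S.hom pg) :
    S.brkt (fun a b => S.curvUp E F a b) pf f g = sgn pg • ∑ a, ∑ b,
      sgn (S.ε a * (pg + 1 + 1)) • (S.ham E pf f b * (S.curv F b a * S.ham E pg g a)) := by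
  have h1 : S.brkt (fun a b => S.curvUp E F a b) pf f g = ∑ c, ∑ b, sgn (S.ε c) •
      (S.ham E pf f b * (S.curv F b c * ∑ d, E c d * S.D d g)) := by
    simp only [brkt, curvUp, ham, Finset.sum_mul, Finset.mul_sum, Finset.smul_sum,
      smul_mul_assoc, mul_smul_comm, mul_assoc]
    -- The summation order changes from `a d b c` to `c b d a`.
    calc _ = ∑ a, ∑ b, ∑ d, ∑ c, _ :=
          Finset.sum_congr rfl fun a _ => Finset.sum_comm
      _ = ∑ a, ∑ b, ∑ c, ∑ d, _ :=
          Finset.sum_congr rfl fun a _ => Finset.sum_congr rfl fun b _ => Finset.sum_comm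
      _ = ∑ b, ∑ a, ∑ c, ∑ d, _ := Finset.sum_comm
      _ = ∑ b, ∑ c, ∑ a, ∑ d, _ := Finset.sum_congr rfl fun b _ => Finset.sum_comm
      _ = ∑ c, ∑ b, ∑ a, ∑ d, _ := Finset.sum_comm
      _ = _ := by
          refine Finset.sum_congr rfl fun c _ => Finset.sum_congr rfl fun b _ => ?_
          rw [Finset.sum_comm]
          exact Finset.sum_congr rfl fun d _ => Finset.sum_congr rfl fun a _ => smul_comm _ _ _
  rw [h1, Finset.smul_sum]
  refine Finset.sum_congr rfl fun c _ => ?_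
  rw [Finset.smul_sum]
  refine Finset.sum_congr rfl fun b _ => ?_
  rw [S.sum_E_mul_D hE hs hg]
  simp only [mul_smul_comm, smul_smul, ← sgn_add]
  congr 2
  generalize S.ε c = x
  clear * -; revert x pg; decide

end

/-- The R-bracket measures the failure of the Leibniz rule:
`(1/2)(f,g)_R = (-1)^{ε_f} Δ_F(f,g) - (-1)^{ε_f}(Δ_F f,g) + (f,Δ_F g)`. -/
theorem R_bracket_measures_leibniz_failure
    {ι : Type} [Fintype ι] [DecidableEq ι] {A : Type} [Ring A] [Algebra ℚ A]
    (S : SuperAlg ι A) (E Einv : ι → ι → A) (F : ι → A)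
    (hE : S.AntiSymp E Einv) (hF : ∀ a, F a ∈ S.hom (S.ε a))
    (hJac : S.JacobiId E) :
    ∀ (pf pg : ZMod 2) (f g : A), f ∈ S.hom pf → g ∈ S.hom pg →
      (1/2 : ℚ) • S.brkt (fun a b => S.curvUp E F a b) pf f g
        = sgn pf • S.lap F E (S.brkt E pf f g)
          - sgn pf • S.brkt E (pf + 1) (S.lap F E f) g
          + S.brkt E pf f (S.lap F E g) := by
  intro pf pg f g hf hg
  have hm := hE.E_mem
  have hs := hE.E_skew
  have hX := S.ham_mem hm hf
  have hY := S.ham_mem hm hg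
  have hΔf : S.lap F E f ∈ S.hom (pf + 1) := by
    rw [S.lap_eq_divF hm hs hf]
    exact Submodule.smul_mem _ _ (Submodule.smul_mem _ _ (S.divF_mem hF hX))
  have hpar : pf + pg + 1 + 1 = (pf + 1) + (pg + 1) := by ring
  rw [S.brkt_skew hm hs hΔf hg, S.lap_eq_divF hm hs (S.brkt_mem hm hf hg),
    funext (S.ham_brkt hm hs hJac hf hg), hpar, S.divF_lie hF hX hY, S.brkt_curvUp hm hs pf f hg,
    S.lap_eq_divF hm hs hf, S.lap_eq_divF hm hs hg, S.brkt_eq E pg, S.brkt_eq E pf]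
  simp only [map_smul, mul_smul_comm, ← Finset.smul_sum]
  generalize (∑ b, S.ham E pf f b * S.D b (S.divF F (pg + 1) (S.ham E pg g))) = u
  generalize (∑ b, S.ham E pg g b * S.D b (S.divF F (pf + 1) (S.ham E pf f))) = v
  generalize (∑ a, ∑ b, sgn (S.ε a * (pg + 1 + 1)) •
    (S.ham E pf f b * (S.curv F b a * S.ham E pg g a))) = w
  simp only [smul_comm _ (1/2 : ℚ), ← smul_add, ← smul_sub]
  congr 1
  have h : ∀ p : ZMod 2, p = 0 ∨ p = 1 := by decide
  have h11 : (1 + 1 : ZMod 2) = 0 := by decide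
  -- What remains is a linear relation between `u`, `v`, `w`, checked for each choice of parities.
  rcases h pf with rfl | rfl <;> rcases h pg with rfl | rfl <;> simp [sgn, h11] <;> abel

end SuperAlg
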